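/- There is an absolute constant C>0 with the following property. Let G=(V,E,ω) be a finite weighted undirected graph on n≥2 vertices all of whose edge weights are at least 1 and all of whose finite pairwise distances are at most Λ, where Λ≥2. Let κ be an integer with 2≤κ≤(log₂ n)/4, let ρ be a real with 1/κ≤ρ<1/2, and let ε be a real with 0<ε≤1. Then there exists a (β,ε)-hopset H for G with at most C·n^{1+1/κ}·log₂Λ edges, where β = ⌈(C·(log₂κ + 1/ρ)/ε)^{log₂κ + 1/ρ}⌉. -/

import Mathlib

open scoped ENNReal Classical

/-- `hopDist w t u v` is the minimum total weight of a `u`–`v` path with at most `t` edges,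
in the weighted graph whose (symmetric) weight function is `w` (`⊤` meaning "no edge"). -/
noncomputable def hopDist {V : Type*} (w : V → V → ℝ≥0∞) : ℕ → V → V → ℝ≥0∞
  | 0, u, v => if u = v then 0 else ⊤
  | t + 1, u, v => min (hopDist w t u v) (⨅ x : V, w u x + hopDist w t x v)

/-- Shortest-path distance. -/
noncomputable def gDist {V : Type*} (w : V → V → ℝ≥0∞) (u v : V) : ℝ≥0∞ :=
  ⨅ t : ℕ, hopDist w t u v

/-- Union of two weighted edge sets, keeping the smaller weight on parallel edges. -/
noncomputable def unionW {V : Type*} (w₁ w₂ : V → V → ℝ≥0∞) (u v : V) : ℝ≥0∞ :=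
  min (w₁ u v) (w₂ u v)

/-- Number of (undirected) edges of a weighted edge set. -/
noncomputable def edgeCount {V : Type*} (w : V → V → ℝ≥0∞) : ℕ :=
  Set.ncard {p : Sym2 V | ∃ u v : V, p = s(u, v) ∧ u ≠ v ∧ w u v ≠ ⊤}

/-- `H` is a `(β, ε)`-hopset for `G`. -/
def IsHopset {V : Type*} (wG wH : V → V → ℝ≥0∞) (β : ℕ) (ε : ℝ) : Prop :=
  ∀ u v : V, gDist wG u v ≤ hopDist (unionW wG wH) β u v ∧
    hopDist (unionW wG wH) β u v ≤ ENNReal.ofReal (1 + ε) * gDist wG u v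

/-!
The construction is a hierarchy of pivots in the style of Thorup and Zwick, `V = A 0, A 1, …`.
Every vertex of `A i` is joined to its nearest pivot in `A (i + 1)` and to the vertices of `A i`
that are strictly closer than this pivot. These edges carry the exact distance of their ends, so
their number does not depend on the aspect ratio. A pivot set with few such edges exists by
averaging over all `t`-tuples of vertices of `A i`: as a tuple avoids the vertices among the `r`
nearest ones with probability `(1 - r / |A i|) ^ t`, the average number of edges at a vertex is at
most `|A i| / (t + 1)`. With `N = |V|`, `s = N ^ (1 / κ)` and `|A i| ≤ N s / (s ^ 2 ^ i * 2 ^ i)`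
the number of edges of level `i` is `O(N s / 2 ^ i)`, while `A (k + 1)` is empty for
`k = ⌊log₂ κ⌋`.

By induction on `i`, any two vertices `x`, `y` are either joined by `(7 M) ^ i` edges of total
weight at most `(1 + 8 i / M) d(x, y)`, or `x` reaches `A (i + 1)` by as many edges within
`2 d(x, y)`; for `i = k` the second alternative is void. In the induction step, a shortest path
from `x` to `y` is cut into `M` pieces of length at most `d(x, y) / M`, separated by single edges,
each of which completes the piece before it to length at least `d(x, y) / M`. The pieces for which
the first alternative holds are bridged directly. Let `u` be the start of the first other piece
and `v` the end of the last one. Both reach `A (i + 1)` within `2 d(x, y) / M`, and the two pivots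
found are either joined by an edge, at the cost of an additional `8 d(x, y) / M`, or the first one
is joined to a pivot in `A (i + 2)`.
-/

section Distances

variable {V : Type*} (w : V → V → ℝ≥0∞)

lemma hopDist_antitone (u v : V) : Antitone fun t ↦ hopDist w t u v :=
  antitone_nat_of_succ_le fun _ ↦ min_le_left _ _

@[simp]
lemma hopDist_self (t : ℕ) (u : V) : hopDist w t u u = 0 := by
  simpa [hopDist] using hopDist_antitone w u u t.zero_le

lemma hopDist_succ_le_add (t : ℕ) (u x v : V) :
    hopDist w (t + 1) u v ≤ w u x + hopDist w t x v :=
  (min_le_right _ _).trans (iInf_le _ x)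

lemma hopDist_one_le (u v : V) : hopDist w 1 u v ≤ w u v := by
  simpa using hopDist_succ_le_add w 0 u v v

lemma hopDist_add_le (s t : ℕ) (u x v : V) :
    hopDist w (s + t) u v ≤ hopDist w s u x + hopDist w t x v := by
  induction s generalizing u with
  | zero =>
    by_cases h : u = x
    · simp [h]
    · simp [hopDist, h]
  | succ s ih =>
    rw [Nat.add_right_comm]
    conv_rhs => rw [hopDist, min_add, ENNReal.iInf_add]
    refine le_min ((hopDist_antitone w u v (Nat.le_succ _)).trans (ih u)) (le_iInf fun y ↦ ?_)
    calc hopDist w (s + t + 1) u v ≤ w u y + hopDist w (s + t) y v :=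
          hopDist_succ_le_add w (s + t) u y v
      _ ≤ w u y + (hopDist w s y x + hopDist w t x v) := by gcongr; exact ih y
      _ = w u y + hopDist w s y x + hopDist w t x v := (add_assoc _ _ _).symm

lemma hopDist_le_add {s t r : ℕ} (h : s + t ≤ r) (u x v : V) :
    hopDist w r u v ≤ hopDist w s u x + hopDist w t x v :=
  (hopDist_antitone w u v h).trans (hopDist_add_le w s t u x v)

lemma gDist_le_hopDist (t : ℕ) (u v : V) : gDist w u v ≤ hopDist w t u v := iInf_le _ t

@[simp]
lemma gDist_self (u : V) : gDist w u u = 0 := by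
  simpa using gDist_le_hopDist w 0 u u

lemma gDist_le_weight (u v : V) : gDist w u v ≤ w u v :=
  (gDist_le_hopDist w 1 u v).trans (hopDist_one_le w u v)

lemma gDist_triangle (u x v : V) : gDist w u v ≤ gDist w u x + gDist w x v :=
  ENNReal.le_iInf_add_iInf fun s t ↦
    (gDist_le_hopDist w (s + t) u v).trans (hopDist_add_le w s t u x v)

variable {w}

lemma hopDist_comm (symm : ∀ u v, w u v = w v u) (t : ℕ) (u v : V) :
    hopDist w t u v = hopDist w t v u := by
  suffices h : ∀ u v, hopDist w t u v ≤ hopDist w t v u from (h u v).antisymm (h v u)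
  induction t with
  | zero => simp [hopDist, eq_comm]
  | succ t ih =>
    intro u v
    conv_rhs => rw [hopDist]
    refine le_min ((hopDist_antitone w u v t.le_succ).trans (ih u v)) (le_iInf fun x ↦ ?_)
    calc hopDist w (t + 1) u v ≤ hopDist w t u x + hopDist w 1 x v := hopDist_add_le w t 1 u x v
      _ ≤ hopDist w t x u + w v x := by
        gcongr
        · exact ih u x
        · exact symm v x ▸ hopDist_one_le w x v
      _ = w v x + hopDist w t x u := add_comm _ _

lemma gDist_comm (symm : ∀ u v, w u v = w v u) (u v : V) : gDist w u v = gDist w v u :=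
  iInf_congr fun t ↦ hopDist_comm symm t u v

lemma iInf_add_gDist_le {u v : V} (huv : u ≠ v) : ⨅ x, w u x + gDist w x v ≤ gDist w u v := by
  refine le_iInf fun t ↦ ?_
  induction t with
  | zero => simp [hopDist, huv]
  | succ t ih =>
    refine le_min ih (iInf_mono fun x ↦ ?_)
    gcongr
    exact gDist_le_hopDist w t x v

lemma exists_add_gDist_eq [Finite V] {u v : V} (huv : u ≠ v) :
    ∃ x, w u x + gDist w x v = gDist w u v := by
  have : Nonempty V := ⟨u⟩
  obtain ⟨x, hx⟩ := Finite.exists_min fun x ↦ w u x + gDist w x v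
  refine ⟨x, ((le_iInf hx).trans (iInf_add_gDist_le huv)).antisymm ?_⟩
  exact (gDist_triangle w u x v).trans (by gcongr; exact gDist_le_weight w u x)

lemma gDist_pos [Finite V] (pos : ∀ u v, 0 < w u v) {u v : V} (huv : u ≠ v) :
    0 < gDist w u v := by
  obtain ⟨x, hx⟩ := exists_add_gDist_eq (w := w) huv
  exact hx ▸ (pos u x).trans_le le_self_add

lemma gDist_le_or_exists_crossing_edge [Finite V] (pos : ∀ u v, 0 < w u v) {x y : V}
    (hfin : gDist w x y ≠ ⊤) (τ : ℝ≥0∞) :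
    gDist w x y ≤ τ ∨ ∃ a b, gDist w x a ≤ τ ∧ τ ≤ gDist w x a + w a b ∧
      gDist w x a + w a b + gDist w b y = gDist w x y := by
  let S : Set V := {a | gDist w x a + gDist w a y = gDist w x y ∧ gDist w x a ≤ τ}
  obtain ⟨a, ⟨ha, haτ⟩, hmin⟩ :=
    S.exists_min_image (fun a ↦ gDist w a y) S.toFinite ⟨x, by simp [S]⟩
  obtain rfl | hay := eq_or_ne a y
  · exact .inl haτ
  obtain ⟨b, hb⟩ := exists_add_gDist_eq (w := w) hay
  have htotal : gDist w x a + w a b + gDist w b y = gDist w x y := by rw [add_assoc, hb, ha]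
  refine .inr ⟨a, b, haτ, ?_, htotal⟩
  by_contra! hτ
  have hxb : gDist w x b ≤ gDist w x a + w a b :=
    (gDist_triangle w x a b).trans (by gcongr; exact gDist_le_weight w a b)
  have hbS : b ∈ S :=
    ⟨(htotal ▸ by gcongr : _ ≤ gDist w x y).antisymm (gDist_triangle w x b y), hxb.trans hτ.le⟩
  have hby : gDist w b y ≠ ⊤ := ne_top_of_le_ne_top hfin (htotal ▸ le_add_self)
  have hcloser : gDist w b y < gDist w a y := by
    rw [← hb, add_comm]
    exact ENNReal.lt_add_right hby (pos a b).ne'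
  exact hcloser.not_ge (hmin b hbS)

end Distances

section Shortcuts

variable {V : Type*}

/-- The weight function `W` is obtained from `w` by adding shortcuts (in the sense of the hopset
literature): symmetric edges that are nowhere lighter than the distance between their ends. -/
structure IsShortcutting (w W : V → V → ℝ≥0∞) : Prop where
  symm (u v : V) : W u v = W v u
  le (u v : V) : W u v ≤ w u v
  gDist_le (u v : V) : gDist w u v ≤ W u v

/-- The vertex `u` reaches the set `S` by a path of at most `h` edges and weight at most `r`. -/
def Reaches (W : V → V → ℝ≥0∞) (h : ℕ) (r : ℝ≥0∞) (S : Set V) (u : V) : Prop :=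
  ∃ z ∈ S, hopDist W h u z ≤ r

/-- The invariant of the hopset analysis: for any two vertices of `S`, either `h` edges of `W`
approximate their `w`-distance up to the factor `c`, or `h` edges lead from the first one to `T`
within `r` times that distance. -/
def ApproxOrReach (w W : V → V → ℝ≥0∞) (h : ℕ) (c r : ℝ≥0∞) (S T : Set V) : Prop :=
  ∀ x ∈ S, ∀ y ∈ S, hopDist W h x y ≤ c * gDist w x y ∨ Reaches W h (r * gDist w x y) T x

/-- Either `N` edges of `W` lead from `x` to `y` within the budget `D`, or they do so up to a gap
between two vertices `u` and `v` that is charged its `w`-distance and whose ends both reach `S`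
within `h` edges and weight `r`. -/
def HopOrGap (w W : V → V → ℝ≥0∞) (h : ℕ) (r : ℝ≥0∞) (S : Set V) (N : ℕ) (D : ℝ≥0∞)
    (x y : V) : Prop :=
  hopDist W N x y ≤ D ∨
    ∃ u v, hopDist W N x u + gDist w u v + hopDist W N v y ≤ D ∧
      Reaches W h r S u ∧ Reaches W h r S v

variable {w W : V → V → ℝ≥0∞} {S T : Set V} {h N N' : ℕ} {r c D e τ : ℝ≥0∞} {x y a b : V}

lemma IsShortcutting.gDist_le_hopDist (hW : IsShortcutting w W) (t : ℕ) (u v : V) :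
    gDist w u v ≤ hopDist W t u v := by
  induction t generalizing u with
  | zero =>
    by_cases h : u = v
    · simp [h]
    · simp [hopDist, h]
  | succ t ih =>
    refine le_min (ih u) (le_iInf fun x ↦ (gDist_triangle w u x v).trans ?_)
    gcongr
    · exact hW.gDist_le u x
    · exact ih x

lemma Reaches.mono {r' : ℝ≥0∞} (hr : r ≤ r') {u : V} (hu : Reaches W h r S u) :
    Reaches W h r' S u :=
  hu.imp fun _ hz ↦ ⟨hz.1, hz.2.trans hr⟩

lemma ApproxOrReach.le_or_reaches_both (hP : ApproxOrReach w W h c r Set.univ S)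
    (symm : ∀ u v, w u v = w v u) (hW : IsShortcutting w W) (x y : V) :
    hopDist W h x y ≤ c * gDist w x y ∨
      Reaches W h (r * gDist w x y) S x ∧ Reaches W h (r * gDist w x y) S y := by
  rcases hP x trivial y trivial with hxy | hx
  · exact .inl hxy
  rcases hP y trivial x trivial with hyx | hy
  · exact .inl (by rwa [hopDist_comm hW.symm, gDist_comm symm])
  · exact .inr ⟨hx, gDist_comm symm x y ▸ hy⟩

lemma HopOrGap.cons_hop {s : ℕ} (hxb : hopDist W s x b ≤ e) (hN : s + N ≤ N')
    (hby : HopOrGap w W h r S N D b y) : HopOrGap w W h r S N' (e + D) x y := by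
  rcases hby with hby | ⟨u, v, hgap, hu, hv⟩
  · exact .inl ((hopDist_le_add W hN x b y).trans (by gcongr))
  · refine .inr ⟨u, v, ?_, hu, hv⟩
    calc hopDist W N' x u + gDist w u v + hopDist W N' v y
        ≤ (hopDist W s x b + hopDist W N b u) + gDist w u v + hopDist W N v y := by
          gcongr
          · exact hopDist_le_add W hN x b u
          · exact hopDist_antitone W v y (by lia)
      _ = hopDist W s x b + (hopDist W N b u + gDist w u v + hopDist W N v y) := by ring
      _ ≤ e + D := by gcongr

lemma HopOrGap.cons_gap (hW : IsShortcutting w W) (hx : Reaches W h r S x)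
    (ha : Reaches W h r S a) (hxb : gDist w x a + w a b ≤ e) (hN : N + 1 ≤ N')
    (hby : HopOrGap w W h r S N D b y) : HopOrGap w W h r S N' (e + D) x y := by
  rcases hby with hby | ⟨u, v, hgap, -, hv⟩
  · refine .inr ⟨x, a, ?_, hx, ha⟩
    calc hopDist W N' x x + gDist w x a + hopDist W N' a y
        ≤ 0 + gDist w x a + (W a b + hopDist W N b y) := by
          rw [hopDist_self]
          gcongr
          exact (hopDist_antitone W a y hN).trans (hopDist_succ_le_add W N a b y)
      _ ≤ 0 + gDist w x a + (w a b + D) := by gcongr; exact hW.le a b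
      _ = gDist w x a + w a b + D := by ring
      _ ≤ e + D := by gcongr
  · -- The two gaps are merged: all that lies between `x` and `v` is charged its `w`-distance.
    refine .inr ⟨x, v, ?_, hx, hv⟩
    have hxv : gDist w x v ≤ gDist w x a + (w a b + (hopDist W N b u + gDist w u v)) :=
      calc gDist w x v ≤ gDist w x a + (gDist w a b + (gDist w b u + gDist w u v)) := by
            refine (gDist_triangle w x a v).trans ?_
            gcongr
            refine (gDist_triangle w a b v).trans ?_
            gcongr
            exact gDist_triangle w b u v
        _ ≤ gDist w x a + (w a b + (hopDist W N b u + gDist w u v)) := by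
            gcongr
            · exact gDist_le_weight w a b
            · exact hW.gDist_le_hopDist N b u
    calc hopDist W N' x x + gDist w x v + hopDist W N' v y
        ≤ 0 + (gDist w x a + (w a b + (hopDist W N b u + gDist w u v))) + hopDist W N v y := by
          rw [hopDist_self]
          gcongr
          exact hopDist_antitone W v y (by lia)
      _ = gDist w x a + w a b + (hopDist W N b u + gDist w u v + hopDist W N v y) := by ring
      _ ≤ e + D := by gcongr

lemma HopOrGap.hop_or_reaches (hW : IsShortcutting w W) (symm : ∀ u v, w u v = w v u)
    (hxy : HopOrGap w W h r S N D x y) (hST : ApproxOrReach w W 1 1 1 S T)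
    (hN : 2 * (N + h) + 1 ≤ N') :
    hopDist W N' x y ≤ D + 4 * r ∨ Reaches W N' (D + 4 * r) T x := by
  rcases hxy with hxy | ⟨u, v, hgap, ⟨z, hz, huz⟩, ⟨z', hz', hvz'⟩⟩
  · exact .inl ((hopDist_antitone W x y (by lia)).trans (hxy.trans le_self_add))
  have hzz' : 1 * gDist w z z' ≤ r + gDist w u v + r :=
    calc 1 * gDist w z z' ≤ gDist w u z + gDist w u v + gDist w v z' := by
          rw [one_mul, gDist_comm symm u z]
          refine (gDist_triangle w z v z').trans ?_
          gcongr
          exact gDist_triangle w z u v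
      _ ≤ r + gDist w u v + r := by
          gcongr
          · exact (hW.gDist_le_hopDist h u z).trans huz
          · exact (hW.gDist_le_hopDist h v z').trans hvz'
  have hxz : hopDist W (N + h) x z ≤ hopDist W N x u + r :=
    (hopDist_add_le W N h x u z).trans (by gcongr)
  refine (hST z hz z' hz').imp (fun hhop ↦ ?_) fun ⟨t, ht, hzt⟩ ↦ ⟨t, ht, ?_⟩
  · have hzy : hopDist W (h + N) z' y ≤ r + hopDist W N v y :=
      (hopDist_add_le W h N z' v y).trans (by gcongr; rwa [hopDist_comm hW.symm])
    have hxz' : hopDist W (N + h + 1) x z' ≤ hopDist W N x u + r + (r + gDist w u v + r) :=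
      (hopDist_add_le W (N + h) 1 x z z').trans (add_le_add hxz (hhop.trans hzz'))
    calc hopDist W N' x y
        ≤ hopDist W N x u + r + (r + gDist w u v + r) + (r + hopDist W N v y) :=
          (hopDist_le_add W (by lia) x z' y).trans (add_le_add hxz' hzy)
      _ = (hopDist W N x u + gDist w u v + hopDist W N v y) + 4 * r := by ring
      _ ≤ D + 4 * r := by gcongr
  · calc hopDist W N' x t ≤ (hopDist W N x u + r) + (r + gDist w u v + r) :=
          (hopDist_le_add W (by lia) x z t).trans (add_le_add hxz (hzt.trans hzz'))
      _ ≤ (hopDist W N x u + r) + (r + gDist w u v + r) + (hopDist W N v y + r) := le_self_add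
      _ = (hopDist W N x u + gDist w u v + hopDist W N v y) + 4 * r := by ring
      _ ≤ D + 4 * r := by gcongr

variable [Finite V]

lemma ApproxOrReach.hopOrGap (hP : ApproxOrReach w W h c 2 Set.univ S)
    (symm : ∀ u v, w u v = w v u) (pos : ∀ u v, 0 < w u v) (hW : IsShortcutting w W)
    (hc : 1 ≤ c) (hτ : τ ≠ ⊤) (m : ℕ) (x y : V) (hxy : gDist w x y ≤ m * τ) :
    HopOrGap w W h (2 * τ) S (m * (h + 1)) (c * gDist w x y) x y := by
  induction m generalizing x with
  | zero =>
    obtain rfl : x = y := by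
      by_contra hne
      exact (gDist_pos pos hne).not_ge (by simpa using hxy)
    exact .inl (by simp)
  | succ m ih =>
    have hfin : gDist w x y ≠ ⊤ := ne_top_of_le_ne_top (by finiteness) hxy
    have hhops : h + 1 + m * (h + 1) ≤ (m + 1) * (h + 1) := by rw [add_one_mul, add_comm]
    have hsegment (a : V) (ha : gDist w x a ≤ τ) : hopDist W h x a ≤ c * gDist w x a ∨
        Reaches W h (2 * τ) S x ∧ Reaches W h (2 * τ) S a :=
      (hP.le_or_reaches_both symm hW x a).imp_right
        (And.imp (.mono (by gcongr)) (.mono (by gcongr)))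
    rcases gDist_le_or_exists_crossing_edge pos hfin τ with hle | ⟨a, b, haτ, hτab, htotal⟩
    · rcases hsegment y hle with hhop | ⟨hx, hy⟩
      · exact .inl ((hopDist_antitone W x y (by lia)).trans hhop)
      · exact .inr ⟨x, y, by simpa using le_mul_of_one_le_left' hc, hx, hy⟩
    have hby : gDist w b y ≤ m * τ := by
      refine (ENNReal.add_le_add_iff_left hτ).1 ?_
      calc τ + gDist w b y ≤ gDist w x a + w a b + gDist w b y := by gcongr
        _ ≤ (m + 1 : ℕ) * τ := htotal.trans_le hxy
        _ = τ + m * τ := by push_cast; ring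
    rw [← htotal, mul_add c]
    rcases hsegment a haτ with hxa | ⟨hx, ha⟩
    · refine .cons_hop (s := h + 1) ?_ hhops (ih b hby)
      calc hopDist W (h + 1) x b ≤ hopDist W h x a + hopDist W 1 a b :=
            hopDist_add_le W h 1 x a b
        _ ≤ c * gDist w x a + c * w a b := by
            gcongr
            exact ((hopDist_one_le W a b).trans (hW.le a b)).trans (le_mul_of_one_le_left' hc)
        _ = c * (gDist w x a + w a b) := (mul_add _ _ _).symm
    · exact .cons_gap hW hx ha (le_mul_of_one_le_left' hc) (by lia) (ih b hby)

theorem ApproxOrReach.next {M h' : ℕ} {A B : Set V} (hA : ApproxOrReach w W h c 2 Set.univ A)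
    (hAB : ApproxOrReach w W 1 1 1 A B) (symm : ∀ u v, w u v = w v u)
    (pos : ∀ u v, 0 < w u v) (hW : IsShortcutting w W) (hM : M ≠ 0)
    (hh' : 2 * (M * (h + 1) + h) + 1 ≤ h') (hc : 1 ≤ c) (hc' : c + 8 / M ≤ 2) :
    ApproxOrReach w W h' (c + 8 / M) 2 Set.univ B := by
  intro x _ y _
  by_cases hfin : gDist w x y = ⊤
  · left
    rw [hfin, ENNReal.mul_top (zero_lt_one.trans_le (hc.trans le_self_add)).ne']
    exact le_top
  have hM₀ : (M : ℝ≥0∞) ≠ 0 := by exact_mod_cast hM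
  have hτ : gDist w x y / M ≠ ⊤ := ENNReal.div_ne_top hfin hM₀
  have hMτ : M * (gDist w x y / M) = gDist w x y :=
    ENNReal.mul_div_cancel hM₀ (ENNReal.natCast_ne_top M)
  have hcost : c * gDist w x y + 4 * (2 * (gDist w x y / M)) = (c + 8 / M) * gDist w x y := by
    simp only [ENNReal.div_eq_inv_mul]; ring
  have hgap := hA.hopOrGap symm pos hW hc hτ M x y hMτ.ge
  refine hcost ▸ (hgap.hop_or_reaches hW symm hAB hh').imp_right (.mono ?_)
  exact hcost.trans_le (by gcongr)

theorem approxOrReach_iterate {M k : ℕ} {A : ℕ → Set V} (symm : ∀ u v, w u v = w v u)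
    (pos : ∀ u v, 0 < w u v) (hW : IsShortcutting w W) (hM : M ≠ 0) (hkM : 8 * k ≤ M)
    (hA₀ : A 0 = Set.univ) (hA : ∀ i ≤ k, ApproxOrReach w W 1 1 1 (A i) (A (i + 1))) :
    ∀ i ≤ k, ApproxOrReach w W ((7 * M) ^ i) (1 + i * (8 / M)) 2 Set.univ (A (i + 1)) := by
  intro i hi
  induction i with
  | zero =>
    intro x hx y hy
    have h₀ := hA 0 hi x (hA₀ ▸ hx) y (hA₀ ▸ hy)
    simp only [pow_zero, Nat.cast_zero, zero_mul, add_zero]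
    exact h₀.imp_right (.mono (by gcongr; exact one_le_two))
  | succ i ih =>
    have hstretch : 1 + i * (8 / M) + 8 / M = 1 + ((i + 1 : ℕ) : ℝ≥0∞) * (8 / M) := by
      push_cast; ring
    have hsmall : ((i + 1 : ℕ) : ℝ≥0∞) * (8 / M) ≤ 1 := by
      rw [← mul_div_assoc, mul_comm]
      exact ENNReal.div_le_of_le_mul (by rw [one_mul]; exact_mod_cast (by lia : 8 * (i + 1) ≤ M))
    have hhops : 2 * (M * ((7 * M) ^ i + 1) + (7 * M) ^ i) + 1 ≤ (7 * M) ^ (i + 1) := by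
      have hpow : 1 ≤ (7 * M) ^ i := Nat.one_le_pow _ _ (by lia)
      rw [pow_succ]
      nlinarith [Nat.one_le_iff_ne_zero.2 hM]
    rw [← hstretch]
    refine (ih (by lia)).next (hA (i + 1) hi) symm pos hW hM hhops le_self_add ?_
    rw [hstretch, ← one_add_one_eq_two]
    gcongr

end Shortcuts

section Sampling

variable {V α : Type*} [LinearOrder α]

lemma sum_card_filter_lt_pow_mul_le (A : Finset V) (f : V → α) (t : ℕ) :
    (∑ y ∈ A, {z ∈ A | f y < f z}.card ^ t) * (t + 1) ≤ A.card ^ (t + 1) := by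
  induction A using Finset.induction_on_min_value f with
  | empty => simp
  | insert a s has hmin ih =>
    have hrank : ∀ y ∈ s, {z ∈ insert a s | f y < f z} = {z ∈ s | f y < f z} := fun y hy ↦ by
      rw [Finset.filter_insert, if_neg (hmin y hy).not_gt]
    have hrank_min : {z ∈ insert a s | f a < f z}.card ≤ s.card := by
      rw [Finset.filter_insert, if_neg (lt_irrefl _)]
      exact Finset.card_filter_le _ _
    have bernoulli : s.card ^ (t + 1) + (t + 1) * s.card ^ t ≤ (s.card + 1) ^ (t + 1) := by
      simpa using pow_add_mul_le_add_pow (b := 1) (Nat.zero_le s.card) (Nat.zero_le _) (t + 1)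
    rw [Finset.sum_insert has, Finset.card_insert_of_notMem has]
    calc ({z ∈ insert a s | f a < f z}.card ^ t
          + ∑ y ∈ s, {z ∈ insert a s | f y < f z}.card ^ t) * (t + 1)
        ≤ (s.card ^ t + ∑ y ∈ s, {z ∈ s | f y < f z}.card ^ t) * (t + 1) := by
          rw [Finset.sum_congr rfl fun y hy ↦ by rw [hrank y hy]]
          gcongr
      _ ≤ s.card ^ (t + 1) + (t + 1) * s.card ^ t := by linarith
      _ ≤ (s.card + 1) ^ (t + 1) := bernoulli

/-- The bunches (in the sense of Thorup and Zwick) of the vertices of `A` with respect to the set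
of pivots `B`: the pairs `(x, y)` with `y` strictly closer to `x` than every pivot. -/
def bunches (d : V → V → α) (A B : Finset V) : Finset (V × V) :=
  {p ∈ A ×ˢ A | ∀ z ∈ B, d p.1 p.2 < d p.1 z}

/-- For any two vertices of `A`, the edge set `F` joins the first one either to the second one or
to a pivot in `B` that is at most as far away. -/
def ServesPairs (d : V → V → α) (A B : Finset V) (F : Finset (V × V)) : Prop :=
  ∀ x ∈ A, ∀ y ∈ A, (x, y) ∈ F ∨ ∃ z ∈ B, d x z ≤ d x y ∧ (x, z) ∈ F

lemma sum_card_bunches_mul_le (A : Finset V) (d : V → V → α) (t : ℕ) :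
    (∑ f ∈ Fintype.piFinset fun _ : Fin t ↦ A, (bunches d A (Finset.univ.image f)).card) * (t + 1)
      ≤ A.card ^ (t + 2) := by
  set samples := Fintype.piFinset fun _ : Fin t ↦ A
  have hcount (p : V × V) :
      {f ∈ samples | ∀ z ∈ Finset.univ.image f, d p.1 p.2 < d p.1 z}.card
        = {z ∈ A | d p.1 p.2 < d p.1 z}.card ^ t := by
    rw [← Fintype.card_piFinset_const]
    congr 1
    ext f
    simp [samples, forall_and]
  have hswap : ∑ f ∈ samples, (bunches d A (Finset.univ.image f)).card
      = ∑ p ∈ A ×ˢ A, {z ∈ A | d p.1 p.2 < d p.1 z}.card ^ t :=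
    calc ∑ f ∈ samples, (bunches d A (Finset.univ.image f)).card
        = ∑ f ∈ samples, ∑ p ∈ A ×ˢ A,
            if ∀ z ∈ Finset.univ.image f, d p.1 p.2 < d p.1 z then 1 else 0 :=
          by simp [bunches]
      _ = ∑ p ∈ A ×ˢ A, ∑ f ∈ samples,
            if ∀ z ∈ Finset.univ.image f, d p.1 p.2 < d p.1 z then 1 else 0 := Finset.sum_comm
      _ = ∑ p ∈ A ×ˢ A, {z ∈ A | d p.1 p.2 < d p.1 z}.card ^ t :=
          Finset.sum_congr rfl fun p _ ↦ by simp [← hcount]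
  rw [hswap, Finset.sum_product, Finset.sum_mul]
  calc ∑ x ∈ A, (∑ y ∈ A, {z ∈ A | d x y < d x z}.card ^ t) * (t + 1)
      ≤ ∑ _x ∈ A, A.card ^ (t + 1) :=
        Finset.sum_le_sum fun x _ ↦ sum_card_filter_lt_pow_mul_le A (d x) t
    _ = A.card ^ (t + 2) := by rw [Finset.sum_const, smul_eq_mul]; ring

lemma exists_card_bunches_mul_le (A : Finset V) (d : V → V → α) (t : ℕ) :
    ∃ B : Finset V, B.card ≤ t ∧ (bunches d A B).card * (t + 1) ≤ A.card ^ 2 := by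
  obtain rfl | hA := A.eq_empty_or_nonempty
  · exact ⟨∅, by simp, by simp [bunches]⟩
  have hsamples : (Fintype.piFinset fun _ : Fin t ↦ A).Nonempty :=
    Fintype.piFinset_nonempty.2 fun _ ↦ hA
  have hsum : ∑ f ∈ Fintype.piFinset fun _ : Fin t ↦ A,
      (bunches d A (Finset.univ.image f)).card * (t + 1) ≤
        ∑ _f ∈ Fintype.piFinset fun _ : Fin t ↦ A, A.card ^ 2 := by
    rw [← Finset.sum_mul, Finset.sum_const, Fintype.card_piFinset_const, smul_eq_mul, ← pow_add]
    exact sum_card_bunches_mul_le A d t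
  obtain ⟨f, -, hf⟩ := Finset.exists_le_of_sum_le hsamples hsum
  exact ⟨Finset.univ.image f, Finset.card_image_le.trans (by simp), hf⟩

lemma exists_servesPairs (A : Finset V) (d : V → V → α) (t : ℕ) :
    ∃ (B : Finset V) (F : Finset (V × V)), B.card ≤ t ∧
      F.card * (t + 1) ≤ A.card ^ 2 + A.card * (t + 1) ∧ ServesPairs d A B F := by
  obtain ⟨B, hB, hbunches⟩ := exists_card_bunches_mul_le A d t
  have hpivot (x : V) : ∃ p, ∀ z ∈ B, p ∈ B ∧ d x p ≤ d x z := by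
    obtain rfl | hne := B.eq_empty_or_nonempty
    · exact ⟨x, by simp⟩
    · obtain ⟨p, hp, hmin⟩ := B.exists_min_image (d x) hne
      exact ⟨p, fun z hz ↦ ⟨hp, hmin z hz⟩⟩
  choose pivot hpivot using hpivot
  refine ⟨B, bunches d A B ∪ A.image fun x ↦ (x, pivot x), hB, ?_, fun x hx y hy ↦ ?_⟩
  · calc (bunches d A B ∪ A.image fun x ↦ (x, pivot x)).card * (t + 1)
        ≤ ((bunches d A B).card + A.card) * (t + 1) := by
          gcongr
          exact (Finset.card_union_le _ _).trans (by gcongr; exact Finset.card_image_le)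
      _ ≤ A.card ^ 2 + A.card * (t + 1) := by rw [add_mul]; gcongr
  · by_cases hbunch : ∀ z ∈ B, d x y < d x z
    · exact .inl (Finset.mem_union_left _ (by simpa [bunches, hx, hy] using hbunch))
    · push Not at hbunch
      obtain ⟨z, hz, hzy⟩ := hbunch
      obtain ⟨hpB, hpz⟩ := hpivot x z hz
      exact .inr ⟨pivot x, hpB, hpz.trans hzy,
        Finset.mem_union_right _ (Finset.mem_image_of_mem _ hx)⟩

lemma exists_pivot_hierarchy [Fintype V] (d : V → V → α) (t : ℕ → ℕ) :
    ∃ (A : ℕ → Finset V) (F : ℕ → Finset (V × V)), A 0 = Finset.univ ∧ ∀ i,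
      (A (i + 1)).card ≤ t i ∧
      (F i).card * (t i + 1) ≤ (A i).card ^ 2 + (A i).card * (t i + 1) ∧
      ServesPairs d (A i) (A (i + 1)) (F i) := by
  choose B F hBF using fun (A : Finset V) (t : ℕ) ↦ exists_servesPairs A d t
  let A : ℕ → Finset V := fun i ↦ Nat.rec Finset.univ (fun i A ↦ B A (t i)) i
  exact ⟨A, fun i ↦ F (A i) (t i), rfl, fun i ↦ hBF (A i) (t i)⟩

end Sampling

section LevelSizes

/-- The upper bound on the size of level `i` of the pivot hierarchy, where `N` is the number of
vertices and `s` is to be thought of as `N ^ (1 / κ)`. -/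
noncomputable def levelBound (N s : ℝ) (i : ℕ) : ℝ := N * s / (s ^ 2 ^ i * 2 ^ i)

variable {N s : ℝ}

lemma levelBound_zero (hs : s ≠ 0) : levelBound N s 0 = N := by simp [levelBound, hs]

lemma levelBound_pos (hN : 0 < N) (hs : 0 < s) (i : ℕ) : 0 < levelBound N s i := by
  unfold levelBound; positivity

lemma levelBound_le (hN : 0 ≤ N) (hs : 1 ≤ s) (i : ℕ) : levelBound N s i ≤ N * (1 / 2) ^ i := by
  rw [levelBound, div_le_iff₀ (by positivity)]
  calc N * s ≤ N * s ^ 2 ^ i := by gcongr; exact le_self_pow₀ hs (by positivity)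
    _ = N * (1 / 2) ^ i * (s ^ 2 ^ i * 2 ^ i) := by rw [one_div, inv_pow]; field_simp

-- The exponents `2 ^ i` in `levelBound` are chosen to make this identity hold, and the factors
-- `2 ^ i` to make its last factor summable over `i`.
lemma levelBound_sq (hs : s ≠ 0) (i : ℕ) :
    levelBound N s i ^ 2 = levelBound N s (i + 1) * (2 * (N * s) * (1 / 2) ^ i) := by
  rw [levelBound, levelBound, pow_succ 2 i, pow_mul s, one_div, inv_pow]
  field_simp
  ring

lemma levelBound_succ_lt_one {κ k : ℕ} (hs : 1 ≤ s) (hsN : s ^ κ = N) (hk : κ + 1 ≤ 2 ^ (k + 1)) :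
    levelBound N s (k + 1) < 1 := by
  rw [levelBound, div_lt_one (by positivity), ← hsN, ← pow_succ]
  calc s ^ (κ + 1) ≤ s ^ 2 ^ (k + 1) := pow_le_pow_right₀ hs hk
    _ < s ^ 2 ^ (k + 1) * 2 ^ (k + 1) :=
      lt_mul_of_one_lt_right (by positivity) (one_lt_pow₀ one_lt_two k.succ_ne_zero)

lemma card_le_of_mul_floor_levelBound_le {f a i : ℕ} (hN : 0 < N) (hs : 1 ≤ s)
    (ha : a ≤ levelBound N s i)
    (hf : f * (⌊levelBound N s (i + 1)⌋₊ + 1) ≤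
      a ^ 2 + a * (⌊levelBound N s (i + 1)⌋₊ + 1)) :
    f ≤ 3 * (N * s) * (1 / 2) ^ i := by
  have hs₀ : 0 < s := zero_lt_one.trans_le hs
  set T : ℝ := ⌊levelBound N s (i + 1)⌋₊ + 1 with hT_def
  have hT : levelBound N s (i + 1) ≤ T := (Nat.lt_floor_add_one _).le
  have hT₀ : 0 < T := by positivity
  have ha_sq : (a : ℝ) ^ 2 ≤ T * (2 * (N * s) * (1 / 2) ^ i) :=
    calc (a : ℝ) ^ 2 ≤ levelBound N s i ^ 2 := by gcongr
      _ = levelBound N s (i + 1) * (2 * (N * s) * (1 / 2) ^ i) := levelBound_sq hs₀.ne' i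
      _ ≤ T * (2 * (N * s) * (1 / 2) ^ i) := by gcongr
  have ha_le : a ≤ N * s * (1 / 2) ^ i :=
    calc (a : ℝ) ≤ N * (1 / 2) ^ i := ha.trans (levelBound_le hN.le hs i)
      _ ≤ N * s * (1 / 2) ^ i := by gcongr; exact le_mul_of_one_le_right hN.le hs
  refine le_of_mul_le_mul_right ?_ hT₀
  calc f * T ≤ a ^ 2 + a * T := by rw [hT_def]; exact_mod_cast hf
    _ ≤ T * (2 * (N * s) * (1 / 2) ^ i) + N * s * (1 / 2) ^ i * T := by gcongr
    _ = 3 * (N * s) * (1 / 2) ^ i * T := by ring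

theorem exists_small_pivot_hierarchy {V α : Type*} [Fintype V] [LinearOrder α] (d : V → V → α)
    {κ k : ℕ} (hκ : κ ≠ 0) (hk : κ + 1 ≤ 2 ^ (k + 1)) :
    ∃ (A : ℕ → Finset V) (F : ℕ → Finset (V × V)), A 0 = Finset.univ ∧ A (k + 1) = ∅ ∧
      (((Finset.range (k + 1)).biUnion F).card : ℝ) ≤ 6 * Fintype.card V ^ (1 + 1 / (κ : ℝ)) ∧
      ∀ i, ServesPairs d (A i) (A (i + 1)) (F i) := by
  cases isEmpty_or_nonempty V
  · refine ⟨fun _ ↦ ∅, fun _ ↦ ∅, by simp, rfl, ?_, by simp [ServesPairs]⟩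
    rw [Finset.eq_empty_of_isEmpty (Finset.biUnion _ _), Finset.card_empty, Nat.cast_zero]
    positivity
  set N : ℝ := (Fintype.card V : ℝ)
  have hN : 1 ≤ N := Nat.one_le_cast.2 Fintype.card_pos
  have hN₀ : 0 < N := zero_lt_one.trans_le hN
  obtain ⟨s, hs, hsN, hNs⟩ : ∃ s : ℝ, 1 ≤ s ∧ s ^ κ = N ∧ N ^ (1 + 1 / (κ : ℝ)) = N * s := by
    refine ⟨N ^ (1 / (κ : ℝ)), Real.one_le_rpow hN (by positivity), ?_, ?_⟩
    · rw [one_div, Real.rpow_inv_natCast_pow hN₀.le hκ]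
    · rw [Real.rpow_add hN₀, Real.rpow_one]
  have hs₀ : 0 < s := zero_lt_one.trans_le hs
  obtain ⟨A, F, hA₀, hAF⟩ := exists_pivot_hierarchy d fun i ↦ ⌊levelBound N s (i + 1)⌋₊
  have hA (i : ℕ) : (A i).card ≤ levelBound N s i := by
    cases i with
    | zero => rw [hA₀, levelBound_zero hs₀.ne', Finset.card_univ]
    | succ i => exact (Nat.le_floor_iff (levelBound_pos hN₀ hs₀ _).le).1 (hAF i).1
  have hF (i : ℕ) : (F i).card ≤ 3 * (N * s) * (1 / 2) ^ i :=
    card_le_of_mul_floor_levelBound_le hN₀ hs (hA i) (hAF i).2.1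
  refine ⟨A, F, hA₀, ?_, ?_, fun i ↦ (hAF i).2.2⟩
  · have hlt := (hA (k + 1)).trans_lt (levelBound_succ_lt_one hs hsN hk)
    exact Finset.card_eq_zero.1 (Nat.lt_one_iff.1 (mod_cast hlt))
  · calc (((Finset.range (k + 1)).biUnion F).card : ℝ)
        ≤ ∑ i ∈ Finset.range (k + 1), ((F i).card : ℝ) := mod_cast Finset.card_biUnion_le
      _ ≤ ∑ i ∈ Finset.range (k + 1), 3 * (N * s) * (1 / 2) ^ i := by gcongr; exact hF _
      _ = 3 * (N * s) * ∑ i ∈ Finset.range (k + 1), (1 / 2) ^ i := (Finset.mul_sum _ _ _).symm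
      _ ≤ 3 * (N * s) * 2 := by gcongr; exact sum_geometric_two_le _
      _ = 6 * N ^ (1 + 1 / (κ : ℝ)) := by rw [hNs]; ring

end LevelSizes

section Hopset

variable {V : Type*} {w : V → V → ℝ≥0∞}

/-- The hopset with edge set `F`, each edge being weighted by the distance of its ends. -/
noncomputable def shortcutWeight (w : V → V → ℝ≥0∞) (F : Finset (V × V)) (u v : V) : ℝ≥0∞ :=
  if u ≠ v ∧ ((u, v) ∈ F ∨ (v, u) ∈ F) then gDist w u v else ⊤

lemma shortcutWeight_comm (symm : ∀ u v, w u v = w v u) (F : Finset (V × V)) (u v : V) :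
    shortcutWeight w F u v = shortcutWeight w F v u := by
  simp only [shortcutWeight, gDist_comm symm u v, ne_comm, or_comm]

lemma shortcutWeight_pos [Finite V] (pos : ∀ u v, 0 < w u v) (F : Finset (V × V)) (u v : V) :
    0 < shortcutWeight w F u v := by
  unfold shortcutWeight
  split_ifs with h
  · exact gDist_pos pos h.1
  · exact ENNReal.zero_lt_top

lemma edgeCount_shortcutWeight_le (w : V → V → ℝ≥0∞) (F : Finset (V × V)) :
    edgeCount (shortcutWeight w F) ≤ F.card := by
  have hsub : {p : Sym2 V | ∃ u v, p = s(u, v) ∧ u ≠ v ∧ shortcutWeight w F u v ≠ ⊤} ⊆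
      (F.image fun p ↦ s(p.1, p.2) : Finset (Sym2 V)) := by
    rintro p ⟨u, v, rfl, -, h⟩
    rw [Finset.mem_coe, Finset.mem_image]
    obtain ⟨-, huv | hvu⟩ := of_not_not fun hF ↦ h (if_neg hF)
    · exact ⟨_, huv, rfl⟩
    · exact ⟨_, hvu, Sym2.eq_swap⟩
  calc edgeCount (shortcutWeight w F) ≤ (F.image fun p ↦ s(p.1, p.2) : Finset (Sym2 V)).card := by
        rw [← Set.ncard_coe_finset]
        exact Set.ncard_le_ncard hsub
    _ ≤ F.card := Finset.card_image_le

lemma isShortcutting_unionW_shortcutWeight (symm : ∀ u v, w u v = w v u) (F : Finset (V × V)) :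
    IsShortcutting w (unionW w (shortcutWeight w F)) where
  symm u v := by rw [unionW, unionW, symm, shortcutWeight_comm symm]
  le u v := min_le_left _ _
  gDist_le u v := by
    refine le_min (gDist_le_weight w u v) ?_
    unfold shortcutWeight
    split_ifs
    · exact le_rfl
    · exact le_top

lemma hopDist_one_unionW_shortcutWeight_le {F : Finset (V × V)} {u v : V} (huv : (u, v) ∈ F) :
    hopDist (unionW w (shortcutWeight w F)) 1 u v ≤ gDist w u v := by
  obtain rfl | hne := eq_or_ne u v
  · simp
  · refine (hopDist_one_le _ u v).trans ((min_le_right _ _).trans_eq ?_)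
    exact if_pos ⟨hne, .inl huv⟩

lemma ServesPairs.approxOrReach {A B : Finset V} {F F' : Finset (V × V)}
    (hF : ServesPairs (gDist w) A B F) (hFF' : F ⊆ F') :
    ApproxOrReach w (unionW w (shortcutWeight w F')) 1 1 1 A B := by
  intro x hx y hy
  rw [one_mul]
  refine (hF x hx y hy).imp (fun hxy ↦ ?_) fun ⟨z, hz, hzy, hxz⟩ ↦ ⟨z, hz, ?_⟩
  · exact hopDist_one_unionW_shortcutWeight_le (hFF' hxy)
  · exact (hopDist_one_unionW_shortcutWeight_le (hFF' hxz)).trans hzy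

theorem exists_isHopset [Fintype V] (symm : ∀ u v, w u v = w v u) (pos : ∀ u v, 0 < w u v)
    {κ k M β : ℕ} {ε : ℝ} (hκ : κ ≠ 0) (hk : κ + 1 ≤ 2 ^ (k + 1)) (hM : M ≠ 0) (hkM : 8 * k ≤ M)
    (hε : k * (8 / M) ≤ ε) (hβ : (7 * M) ^ k ≤ β) :
    ∃ wH : V → V → ℝ≥0∞, (∀ u v, wH u v = wH v u) ∧ (∀ u v, 0 < wH u v) ∧
      edgeCount wH ≤ 6 * (Fintype.card V : ℝ) ^ (1 + 1 / (κ : ℝ)) ∧ IsHopset w wH β ε := by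
  obtain ⟨A, F, hA₀, hA_last, hF_card, hF⟩ := exists_small_pivot_hierarchy (gDist w) hκ hk
  set F' := (Finset.range (k + 1)).biUnion F
  have hW := isShortcutting_unionW_shortcutWeight symm F'
  refine ⟨shortcutWeight w F', shortcutWeight_comm symm F', shortcutWeight_pos pos F',
    le_trans (mod_cast edgeCount_shortcutWeight_le w F') hF_card,
    fun u v ↦ ⟨hW.gDist_le_hopDist β u v, ?_⟩⟩
  have hA (i : ℕ) (hi : i ≤ k) :
      ApproxOrReach w (unionW w (shortcutWeight w F')) 1 1 1 (A i) (A (i + 1)) :=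
    (hF i).approxOrReach (Finset.subset_biUnion_of_mem F (Finset.mem_range.2 (by lia)))
  have happrox := approxOrReach_iterate (A := fun i ↦ A i) symm pos hW hM hkM (by simp [hA₀]) hA
    k le_rfl u trivial v trivial
  have hstretch : 1 + (k : ℝ≥0∞) * (8 / M) ≤ ENNReal.ofReal (1 + ε) :=
    calc 1 + (k : ℝ≥0∞) * (8 / M) = ENNReal.ofReal (1 + k * (8 / M)) := by
          rw [ENNReal.ofReal_add zero_le_one (by positivity), ENNReal.ofReal_mul (by positivity),
            ENNReal.ofReal_div_of_pos (by positivity)]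
          simp
      _ ≤ ENNReal.ofReal (1 + ε) := by gcongr
  calc hopDist (unionW w (shortcutWeight w F')) β u v
      ≤ hopDist (unionW w (shortcutWeight w F')) ((7 * M) ^ k) u v := hopDist_antitone _ u v hβ
    _ ≤ (1 + k * (8 / M)) * gDist w u v := happrox.resolve_right (by simp [Reaches, hA_last])
    _ ≤ ENNReal.ofReal (1 + ε) * gDist w u v := by gcongr

end Hopset

lemma seven_mul_ceil_pow_le_ceil_rpow {k : ℕ} {ε L : ℝ} (hε : 0 < ε) (hε₁ : ε ≤ 1)
    (hL : k + 2 ≤ L) :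
    (7 * ⌈8 * (k + 1) / ε⌉₊) ^ k ≤ ⌈(64 * L / ε) ^ L⌉₊ := by
  have hk : 1 ≤ (k + 1) / ε := (one_le_div hε).2 (hε₁.trans (by simp))
  have hbase : 7 * (⌈8 * (k + 1) / ε⌉₊ : ℝ) ≤ 64 * L / ε :=
    calc 7 * (⌈8 * (k + 1) / ε⌉₊ : ℝ) ≤ 7 * (8 * (k + 1) / ε + 1) := by
          gcongr; exact (Nat.ceil_lt_add_one (by positivity)).le
      _ ≤ 7 * (8 * (k + 1) / ε + (k + 1) / ε) := by gcongr
      _ = 63 * (k + 1) / ε := by ring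
      _ ≤ 64 * L / ε := by gcongr <;> linarith
  have hbase₁ : 1 ≤ 64 * L / ε := by rw [one_le_div hε]; linarith [k.cast_nonneg (α := ℝ)]
  have hpow : ((7 * ⌈8 * (k + 1) / ε⌉₊) ^ k : ℝ) ≤ (64 * L / ε) ^ L :=
    calc ((7 * ⌈8 * (k + 1) / ε⌉₊) ^ k : ℝ) ≤ (64 * L / ε) ^ k := by gcongr
      _ ≤ (64 * L / ε) ^ L := by
        rw [← Real.rpow_natCast]
        exact Real.rpow_le_rpow_of_exponent_le hbase₁ (by linarith)
  exact_mod_cast hpow.trans (Nat.le_ceil _)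

theorem hopset_with_constant_hopbound_bounded_aspect_ratio_general {V : Type*} [Fintype V]
    {w : V → V → ℝ≥0∞} (symm : ∀ u v, w u v = w v u) (pos : ∀ u v, 0 < w u v) {κ : ℕ}
    (hκ : κ ≠ 0) {ρ ε : ℝ} (hρ : 0 < ρ) (hρ₂ : ρ ≤ 1 / 2) (hε : 0 < ε) (hε₁ : ε ≤ 1) :
    ∃ wH : V → V → ℝ≥0∞, (∀ u v, wH u v = wH v u) ∧ (∀ u v, 0 < wH u v) ∧
      edgeCount wH ≤ 6 * (Fintype.card V : ℝ) ^ (1 + 1 / (κ : ℝ)) ∧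
      IsHopset w wH ⌈(64 * (Real.logb 2 κ + 1 / ρ) / ε) ^ (Real.logb 2 κ + 1 / ρ)⌉₊ ε := by
  set k := Nat.log 2 κ
  have hL : k + 2 ≤ Real.logb 2 κ + 1 / ρ := by
    gcongr
    · exact mod_cast Real.natLog_le_logb κ 2
    · rw [le_one_div two_pos hρ]; exact hρ₂
  have hM : 8 * (k + 1) / ε ≤ ⌈8 * (k + 1) / ε⌉₊ := Nat.le_ceil _
  have hkM : (8 * (k + 1) : ℝ) ≤ ⌈8 * (k + 1) / ε⌉₊ :=
    (le_div_self (by positivity) hε hε₁).trans hM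
  refine exists_isHopset symm pos hκ (Nat.lt_pow_succ_log_self one_lt_two κ) (by positivity)
    (M := ⌈8 * (k + 1) / ε⌉₊) ?_ ?_ (seven_mul_ceil_pow_le_ceil_rpow hε hε₁ hL)
  · exact_mod_cast (by linarith : (8 * k : ℝ) ≤ ⌈8 * (k + 1) / ε⌉₊)
  · rw [← mul_div_assoc, div_le_iff₀ (by positivity)]
    rw [div_le_iff₀ hε] at hM
    linarith

theorem hopset_with_constant_hopbound_bounded_aspect_ratio :
    ∃ C : ℝ, 0 < C ∧
      ∀ (V : Type) [Fintype V] (wG : V → V → ℝ≥0∞) (n κ : ℕ) (ρ ε Λ : ℝ),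
        Fintype.card V = n → 2 ≤ n →
        (∀ u v, wG u v = wG v u) →
        (∀ u v, wG u v ≠ ⊤ → 1 ≤ wG u v) →
        2 ≤ Λ →
        (∀ u v, gDist wG u v ≠ ⊤ → gDist wG u v ≤ ENNReal.ofReal Λ) →
        2 ≤ κ → (κ : ℝ) ≤ Real.logb 2 n / 4 →
        1 / (κ : ℝ) ≤ ρ → ρ < 1 / 2 →
        0 < ε → ε ≤ 1 →
        ∃ wH : V → V → ℝ≥0∞,
          (∀ u v, wH u v = wH v u) ∧
          (∀ u v, 0 < wH u v) ∧
          (edgeCount wH : ℝ) ≤ C * (n : ℝ) ^ (1 + 1 / (κ : ℝ)) * Real.logb 2 Λ ∧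
          IsHopset wG wH
            ⌈(C * (Real.logb 2 κ + 1 / ρ) / ε) ^ (Real.logb 2 κ + 1 / ρ)⌉₊ ε := by
  refine ⟨64, by norm_num, fun V _ wG n κ ρ ε Λ hn _ symm one_le hΛ _ hκ _ hκρ hρ hε hε₁ ↦ ?_⟩
  have pos (u v : V) : 0 < wG u v :=
    pos_iff_ne_zero.2 fun h ↦ absurd (one_le u v (by simp [h])) (by simp [h])
  have hρ₀ : 0 < ρ := lt_of_lt_of_le (by positivity) hκρ
  have hlog : 1 ≤ Real.logb 2 Λ := by
    rwa [Real.le_logb_iff_rpow_le one_lt_two (by linarith), Real.rpow_one]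
  obtain ⟨wH, hH_symm, hH_pos, hH_card, hH⟩ :=
    hopset_with_constant_hopbound_bounded_aspect_ratio_general symm pos (by lia : κ ≠ 0) hρ₀ hρ.le
      hε hε₁
  refine ⟨wH, hH_symm, hH_pos, ?_, hH⟩
  calc (edgeCount wH : ℝ) ≤ 6 * n ^ (1 + 1 / (κ : ℝ)) := hn ▸ hH_card
    _ ≤ 64 * n ^ (1 + 1 / (κ : ℝ)) * 1 := by rw [mul_one]; gcongr; norm_num
    _ ≤ 64 * n ^ (1 + 1 / (κ : ℝ)) * Real.logb 2 Λ := by gcongr
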